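/- arXiv:1605.03934 — 5 statements merged into one kernel-verified Lean document; each statement's English description precedes it below -/
import Mathlib

section
/- Let R be a commutative ring and s ∈ R. An R-module C is an s-contramodule (i.e., Hom_R(R[s⁻¹], C) = 0 = Ext¹_R(R[s⁻¹], C)) if and only if for every sequence a₀, a₁, a₂, … ∈ C the system bₙ − s·bₙ₊₁ = aₙ (n ≥ 0) has a unique solution (bₙ) in C. -/
open CategoryTheory Opposite

noncomputable def sconD (R : Type) [CommRing R] (s : R) : (ℕ →₀ R) →ₗ[R] (ℕ →₀ R) :=
  Finsupp.linearCombination R (fun n => Finsupp.single n (1:R) - s • Finsupp.single (n+1) (1:R))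

noncomputable def sconPi (R : Type) [CommRing R] (s : R) : (ℕ →₀ R) →ₗ[R] Localization.Away s :=
  Finsupp.linearCombination R (fun n => IsLocalization.mk' (Localization.Away s) (1:R)
    (⟨s ^ n, n, rfl⟩ : Submonoid.powers s))

lemma sconD_single (R : Type) [CommRing R] (s : R) (n : ℕ) (r : R) :
    sconD R s (Finsupp.single n r) = Finsupp.single n r - Finsupp.single (n+1) (s * r) := by
  simp [sconD, smul_sub, mul_comm]

lemma sconPi_single (R : Type) [CommRing R] (s : R) (n : ℕ) (r : R) :
    sconPi R s (Finsupp.single n r) = IsLocalization.mk' (Localization.Away s) r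
    (⟨s ^ n, n, rfl⟩ : Submonoid.powers s) := by
  simp [sconPi, Algebra.smul_def, IsLocalization.mul_mk'_eq_mk'_of_mul]

lemma sconPi_sconD (R : Type) [CommRing R] (s : R) : sconPi R s ∘ₗ sconD R s = 0 := by
  ext n
  simp only [LinearMap.comp_apply, Finsupp.lsingle_apply, sconD_single, map_sub, sconPi_single,
    LinearMap.zero_apply]
  rw [sub_eq_zero, IsLocalization.mk'_eq_iff_eq]
  simp [pow_succ, mul_comm]

lemma sconD_apply_zero (R : Type) [CommRing R] (s : R) (x : ℕ →₀ R) :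
    sconD R s x 0 = x 0 := by
  induction x using Finsupp.induction_linear with
  | zero => simp
  | add f g hf hg => simp [hf, hg]
  | single n r => simp [sconD_single]

lemma sconD_apply_succ (R : Type) [CommRing R] (s : R) (x : ℕ →₀ R) (n : ℕ) :
    sconD R s x (n+1) = x (n+1) - s * x n := by
  induction x using Finsupp.induction_linear with
  | zero => simp
  | add f g hf hg => simp [hf, hg]; ring
  | single m r => simp [sconD_single, Finsupp.single_apply]; grind

lemma sconD_injective (R : Type) [CommRing R] (s : R) : Function.Injective (sconD R s) := by
  rw [injective_iff_map_eq_zero]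
  intro x hx
  ext n
  induction n with
  | zero => rw [← sconD_apply_zero R s, hx]
  | succ n ih =>
    have := sconD_apply_succ R s x n
    rw [hx, ih] at this
    simpa using this.symm

lemma sconPi_surjective (R : Type) [CommRing R] (s : R) : Function.Surjective (sconPi R s) := by
  intro y
  obtain ⟨r, ⟨_, n, rfl⟩, rfl⟩ := IsLocalization.exists_mk'_eq (Submonoid.powers s) y
  exact ⟨_, sconPi_single R s n r⟩

lemma scon_shift (R : Type) [CommRing R] (s : R) (n k : ℕ) (r : R) :
    Finsupp.single n r - Finsupp.single (n+k) (s^k * r) ∈ LinearMap.range (sconD R s) := by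
  induction k with
  | zero => simp
  | succ k ih =>
    have h := Submodule.add_mem _ ih (LinearMap.mem_range_self (sconD R s)
      (Finsupp.single (n+k) (s^k*r)))
    rw [sconD_single, sub_add_sub_cancel] at h
    rwa [pow_succ', mul_assoc]

lemma scon_reduce (R : Type) [CommRing R] (s : R) (x : ℕ →₀ R) :
    ∃ N r, x - Finsupp.single N r ∈ LinearMap.range (sconD R s) := by
  induction x using Finsupp.induction_linear with
  | zero => exact ⟨0, 0, by simp⟩
  | add f g hf hg =>
    obtain ⟨N, r, h⟩ := hf
    obtain ⟨M, t, h'⟩ := hg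
    refine ⟨N + M, s^M*r + s^N*t, ?_⟩
    have h1 := Submodule.add_mem _ h (scon_shift R s N M r)
    have h2 := Submodule.add_mem _ h' (scon_shift R s M N t)
    rw [sub_add_sub_cancel] at h1 h2
    have h3 := Submodule.add_mem _ h1 h2
    rw [add_comm M N] at h3
    convert h3 using 1
    rw [Finsupp.single_add]; abel
  | single n r => exact ⟨n, r, by simp⟩

lemma sconD_range (R : Type) [CommRing R] (s : R) (x : ℕ →₀ R) (hx : sconPi R s x = 0) :
    ∃ y, sconD R s y = x := by
  obtain ⟨N, r, z, hz⟩ := scon_reduce R s x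
  have h : sconPi R s (Finsupp.single N r) = 0 := by
    have h1 := LinearMap.congr_fun (sconPi_sconD R s) z
    rw [LinearMap.comp_apply, hz, map_sub, hx] at h1
    simpa using h1
  rw [sconPi_single, IsLocalization.mk'_eq_zero_iff] at h
  obtain ⟨⟨_, k, rfl⟩, hk⟩ := h
  obtain ⟨w, hw⟩ := scon_shift R s N k r
  refine ⟨z + w, ?_⟩
  simp only at hk
  rw [map_add, hz, hw, hk]; simp

/-- The terms of the resolution. -/
noncomputable def sconX (R : Type) [CommRing R] : ℕ → ModuleCat.{0} R
  | 0 => ModuleCat.of R (ℕ →₀ R)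
  | 1 => ModuleCat.of R (ℕ →₀ R)
  | _ + 2 => ModuleCat.of R PUnit

/-- The differentials of the resolution. -/
noncomputable def sconDiff (R : Type) [CommRing R] (s : R) : ∀ n, sconX R (n+1) ⟶ sconX R n
  | 0 => ModuleCat.ofHom (sconD R s)
  | _ + 1 => 0

noncomputable def sconComplex (R : Type) [CommRing R] (s : R) : ChainComplex (ModuleCat.{0} R) ℕ :=
  ChainComplex.of (sconX R) (sconDiff R s) (fun n => by
    show (0 : sconX R (n+2) ⟶ sconX R (n+1)) ≫ _ = 0
    simp)

lemma sconComplex_d10 (R : Type) [CommRing R] (s : R) :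
    (sconComplex R s).d 1 0 = ModuleCat.ofHom (sconD R s) :=
  ChainComplex.of_d (sconX R) (sconDiff R s) 0

lemma sconComplex_dsucc (R : Type) [CommRing R] (s : R) (n : ℕ) :
    (sconComplex R s).d (n+2) (n+1) = 0 :=
  ChainComplex.of_d _ _ (n+1)

noncomputable def sconAug (R : Type) [CommRing R] (s : R) : sconComplex R s ⟶
    (ChainComplex.single₀ _).obj (ModuleCat.of R (Localization.Away s)) :=
  (ChainComplex.toSingle₀Equiv _ _).symm ⟨ModuleCat.ofHom (sconPi R s), by
    rw [sconComplex_d10]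
    erw [← ModuleCat.ofHom_comp, sconPi_sconD]; rfl⟩

lemma scon_isZero (R : Type) [CommRing R] (s : R) (n : ℕ) :
    Limits.IsZero ((sconComplex R s).X (n+2)) :=
  ModuleCat.isZero_of_subsingleton (ModuleCat.of R PUnit)

lemma scon_projective (R : Type) [CommRing R] (s : R) (n : ℕ) :
    Projective ((sconComplex R s).X n) := by
  have h : Projective (ModuleCat.of R (ℕ →₀ R)) :=
    ModuleCat.projective_of_free (Finsupp.basisSingleOne (R := R) (ι := ℕ))
  match n with
  | 0 => exact h
  | 1 => exact h
  | n + 2 => exact (scon_isZero R s n).projective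

lemma sconAug_f0 (R : Type) [CommRing R] (s : R) :
    (sconAug R s).f 0 = ModuleCat.ofHom (sconPi R s) :=
  ChainComplex.toSingle₀Equiv_symm_apply_f_zero _ _

lemma scon_quasiIso (R : Type) [CommRing R] (s : R) : QuasiIso (sconAug R s) where
  quasiIsoAt n := by
    match n with
    | 0 =>
      rw [ChainComplex.quasiIsoAt₀_iff, ShortComplex.quasiIso_iff_of_zeros']
      · constructor
        · rw [ShortComplex.moduleCat_exact_iff]
          intro x hx
          change (sconAug R s).f 0 x = 0 at hx
          rw [sconAug_f0] at hx
          obtain ⟨y, hy⟩ := sconD_range R s x hx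
          refine ⟨y, ?_⟩
          change (sconComplex R s).d 1 0 y = x
          rw [sconComplex_d10]
          exact hy
        · change Epi ((sconAug R s).f 0)
          rw [sconAug_f0]
          exact (ModuleCat.epi_iff_surjective (ModuleCat.ofHom (sconPi R s))).2
            (sconPi_surjective R s)
      · exact (sconComplex R s).shape _ _ (by simp)
      · rfl
      · rfl
    | 1 =>
      rw [quasiIsoAt_iff_exactAt' _ _ (ChainComplex.exactAt_succ_single_obj _ _),
        HomologicalComplex.exactAt_iff' _ 2 1 0 (by simp) (by simp),
        ShortComplex.moduleCat_exact_iff]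
      intro x hx
      change (sconComplex R s).d 1 0 x = 0 at hx
      rw [sconComplex_d10] at hx
      refine ⟨0, ?_⟩
      rw [map_zero]
      refine (sconD_injective R s ?_).symm
      exact hx.trans (map_zero (sconD R s)).symm
    | n + 2 =>
      rw [quasiIsoAt_iff_exactAt' _ _ (ChainComplex.exactAt_succ_single_obj _ _),
        HomologicalComplex.exactAt_iff]
      exact ShortComplex.exact_of_isZero_X₂ _ (scon_isZero R s n)

noncomputable def sconRes (R : Type) [CommRing R] (s : R) :
    ProjectiveResolution (ModuleCat.of R (Localization.Away s)) where
  complex := sconComplex R s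
  projective := scon_projective R s
  π := sconAug R s
  quasiIso := scon_quasiIso R s

lemma scon_ext_iff (R : Type) [CommRing R] (s : R) (C : Type) [AddCommGroup C] [Module R C] :
    Subsingleton (((Ext R (ModuleCat R) 1).obj
        (op (ModuleCat.of R (Localization.Away s)))).obj (ModuleCat.of R C)) ↔
    ∀ f : (ℕ →₀ R) →ₗ[R] C, ∃ g : (ℕ →₀ R) →ₗ[R] C, g ∘ₗ sconD R s = f := by
  rw [← ModuleCat.isZero_iff_subsingleton,
    ((sconRes R s).isoExt (R := R) 1 (ModuleCat.of R C)).isZero_iff,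
    ← HomologicalComplex.exactAt_iff_isZero_homology,
    HomologicalComplex.exactAt_iff' _ 0 1 2 (by simp) (by simp),
    ShortComplex.moduleCat_exact_iff]
  have key : ∀ (g f : (ℕ →₀ R) →ₗ[R] C), g ∘ₗ sconD R s = f ↔
      (sconComplex R s).d 1 0 ≫ (ModuleCat.ofHom g : (sconComplex R s).X 0 ⟶ ModuleCat.of R C)
        = (ModuleCat.ofHom f : (sconComplex R s).X 1 ⟶ ModuleCat.of R C) := by
    intro g f
    rw [sconComplex_d10]
    constructor
    · rintro rfl; rfl
    · intro h
      exact congrArg ModuleCat.Hom.hom h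
  constructor
  · intro H f
    obtain ⟨g, hg⟩ := H (ModuleCat.ofHom f : (sconComplex R s).X 1 ⟶ ModuleCat.of R C)
      (Limits.IsZero.eq_of_src (scon_isZero R s 0) _ _)
    exact ⟨ModuleCat.Hom.hom (show ModuleCat.of R (ℕ →₀ R) ⟶ ModuleCat.of R C from g),
      (key _ _).2 hg⟩
  · intro H f _
    obtain ⟨g, hg⟩ := H (ModuleCat.Hom.hom (show ModuleCat.of R (ℕ →₀ R) ⟶ ModuleCat.of R C from f))
    exact ⟨(ModuleCat.ofHom g : (sconComplex R s).X 0 ⟶ ModuleCat.of R C), (key _ _).1 hg⟩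

lemma scon_comp_single (R : Type) [CommRing R] (s : R) (C : Type) [AddCommGroup C] [Module R C]
    (g : (ℕ →₀ R) →ₗ[R] C) (n : ℕ) :
    g (sconD R s (Finsupp.single n 1)) =
      g (Finsupp.single n 1) - s • g (Finsupp.single (n+1) 1) := by
  rw [sconD_single, map_sub, ← map_smul]; simp

lemma scon_ext_iff' (R : Type) [CommRing R] (s : R) (C : Type) [AddCommGroup C] [Module R C] :
    Subsingleton (((Ext R (ModuleCat R) 1).obj
        (op (ModuleCat.of R (Localization.Away s)))).obj (ModuleCat.of R C)) ↔
    ∀ a : ℕ → C, ∃ b : ℕ → C, ∀ n : ℕ, b n - s • b (n + 1) = a n := by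
  rw [scon_ext_iff]
  constructor
  · intro H a
    obtain ⟨g, hg⟩ := H (Finsupp.linearCombination R a)
    refine ⟨fun n => g (Finsupp.single n 1), fun n => ?_⟩
    have := LinearMap.congr_fun hg (Finsupp.single n 1)
    rw [LinearMap.comp_apply, scon_comp_single] at this
    simpa using this
  · intro H f
    obtain ⟨b, hb⟩ := H (fun n => f (Finsupp.single n 1))
    refine ⟨Finsupp.linearCombination R b, ?_⟩
    ext n
    simp only [LinearMap.comp_apply, Finsupp.lsingle_apply]
    rw [scon_comp_single, ← hb]
    simp

lemma scon_hom_iff (R : Type) [CommRing R] (s : R) (C : Type) [AddCommGroup C] [Module R C] :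
    Subsingleton (Localization.Away s →ₗ[R] C) ↔
    ∀ b : ℕ → C, (∀ n : ℕ, b n - s • b (n + 1) = 0) → b = 0 := by
  constructor
  · intro H b hb
    have h0 : Finsupp.linearCombination R b ∘ₗ sconD R s = 0 := by
      ext n
      simp only [LinearMap.comp_apply, Finsupp.lsingle_apply]
      rw [scon_comp_single]
      simpa using hb n
    have hk : LinearMap.ker (sconPi R s) ≤ LinearMap.ker (Finsupp.linearCombination R b) := by
      intro x hx
      obtain ⟨y, rfl⟩ := sconD_range R s x hx
      exact LinearMap.congr_fun h0 y
    let e := (sconPi R s).quotKerEquivOfSurjective (sconPi_surjective R s)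
    let h : Localization.Away s →ₗ[R] C :=
      (LinearMap.ker (sconPi R s)).liftQ _ hk ∘ₗ e.symm.toLinearMap
    have hh : h = 0 := Subsingleton.elim _ _
    funext n
    have h1 := LinearMap.congr_fun hh (e (Submodule.Quotient.mk (Finsupp.single n 1)))
    simpa [h] using h1
  · intro H
    refine ⟨fun f g => ?_⟩
    have := H (fun n => (f - g) (sconPi R s (Finsupp.single n 1))) (fun n => by
      have := scon_comp_single R s C ((f - g) ∘ₗ sconPi R s) n
      have h2 := LinearMap.congr_fun (sconPi_sconD R s) (Finsupp.single n 1)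
      simp only [LinearMap.comp_apply] at this h2
      rw [← this, h2]; simp)
    have h3 : (f - g) ∘ₗ sconPi R s = 0 := by
      ext n
      exact congrFun this n
    rw [← sub_eq_zero]
    ext y
    obtain ⟨x, rfl⟩ := sconPi_surjective R s y
    exact LinearMap.congr_fun h3 x

/-- For a commutative ring `R`, an element `s ∈ R`, and an `R`-module `C`,
`C` is an `s`-contramodule (`Hom_R(R[s⁻¹],C) = 0 = Ext¹_R(R[s⁻¹],C)`) if and only if every
infinite system of equations `bₙ - s·bₙ₊₁ = aₙ` (n ≥ 0) has a unique solution in `C`. -/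
theorem isSContramodule_iff_equation_system_uniquely_solvable
    (R : Type) [CommRing R] (s : R) (C : Type) [AddCommGroup C] [Module R C] :
    (Subsingleton (Localization.Away s →ₗ[R] C) ∧
      Subsingleton (((Ext R (ModuleCat R) 1).obj
        (op (ModuleCat.of R (Localization.Away s)))).obj (ModuleCat.of R C))) ↔
      ∀ a : ℕ → C, ∃! b : ℕ → C, ∀ n : ℕ, b n - s • b (n + 1) = a n := by
  rw [scon_hom_iff, scon_ext_iff']
  constructor
  · rintro ⟨hu, he⟩ a
    obtain ⟨b, hb⟩ := he a
    refine ⟨b, hb, fun c hc => ?_⟩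
    rw [← sub_eq_zero]
    refine hu _ fun n => ?_
    have h1 := hb n
    have h2 := hc n
    simp only [Pi.sub_apply, smul_sub]
    rw [sub_sub_sub_comm, h1, h2, sub_self]
  · intro H
    refine ⟨fun b hb => ?_, fun a => (H a).exists⟩
    exact (H 0).unique hb (fun n => by simp)
end

section
/- Let R be a commutative ring, s ∈ R, and C an R-module on which s acts injectively (C is s-torsion-free). If the natural map C → lim_n C/sⁿC is surjective, then Ext¹_R(R[s⁻¹], C) = 0. -/
open CategoryTheory Opposite

lemma aux_solve {R : Type} [CommRing R] (s : R) {C : Type} [AddCommGroup C] [Module R C]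
    (htf : Function.Injective (fun x : C => s • x))
    (hcomp : Function.Surjective (AdicCompletion.of (Ideal.span {s}) C)) (c : ℕ → C) :
    ∃ x : ℕ → C, ∀ n, x n = s • x (n + 1) + c n := by
  have hpow : ∀ n : ℕ, Function.Injective (fun x : C => s ^ n • x) := by
    intro n
    induction n with
    | zero => intro a b h; simpa using h
    | succ n ih =>
      intro a b h
      apply htf; apply ih
      simpa [pow_succ, mul_smul] using h
  have hmem : ∀ (n : ℕ) (y : C), y ∈ ((Ideal.span {s}) ^ n • ⊤ : Submodule R C) ↔
      ∃ z, y = s ^ n • z := by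
    intro n y
    rw [Ideal.span_singleton_pow, Submodule.ideal_span_singleton_smul,
      Submodule.mem_smul_pointwise_iff_exists]
    simp [eq_comm]
  have hpre := AdicCompletion.of_surjective_iff.mp hcomp
  obtain ⟨L, hL⟩ := hpre.prec (f := fun n => ∑ k ∈ Finset.range n, s ^ k • c k) (by
    intro m n hmn
    induction n, hmn using Nat.le_induction with
    | base => rfl
    | succ n hmn ih =>
      refine ih.trans ?_
      rw [SModEq.sub_mem, hmem]
      refine ⟨- s ^ (n - m) • c n, ?_⟩
      rw [Finset.sum_range_succ, smul_smul, mul_neg, ← pow_add, Nat.add_sub_cancel' hmn]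
      simp)
  have : ∀ n, ∃ z, L - ∑ k ∈ Finset.range n, s ^ k • c k = s ^ n • z := fun n => by
    rw [← hmem, ← SModEq.sub_mem]; exact (hL n).symm
  choose x hx using this
  refine ⟨x, fun n => hpow n ?_⟩
  have h1 := hx (n + 1)
  have h0 := hx n
  simp only [Finset.sum_range_succ] at h1
  simp only [smul_add, smul_smul, ← pow_succ, ← h1, ← h0]
  abel

lemma aux_extend {R : Type} [CommRing R] (s : R) {C : Type} [AddCommGroup C] [Module R C]
    (hsol : ∀ c : ℕ → C, ∃ x : ℕ → C, ∀ n, x n = s • x (n + 1) + c n)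
    {P₂ P₁ P₀ : Type} [AddCommGroup P₂] [Module R P₂] [AddCommGroup P₁] [Module R P₁]
    [AddCommGroup P₀] [Module R P₀] (d₂ : P₂ →ₗ[R] P₁) (d₁ : P₁ →ₗ[R] P₀)
    (π : P₀ →ₗ[R] Localization.Away s) (h₂ : ∀ a, d₁ a = 0 → ∃ b, d₂ b = a)
    (h₁ : ∀ a, π a = 0 → ∃ b, d₁ b = a) (hd : ∀ a, π (d₁ a) = 0)
    (hπ : Function.Surjective π)
    (f : P₁ →ₗ[R] C) (hf : ∀ b, f (d₂ b) = 0) :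
    ∃ g : P₀ →ₗ[R] C, ∀ a, g (d₁ a) = f a := by
  let v : Localization.Away s := IsLocalization.Away.invSelf s
  have hv : s • v = 1 := by
    rw [Algebra.smul_def]; exact IsLocalization.Away.mul_invSelf s
  have hv' : ∀ n : ℕ, s ^ n • v ^ n = 1 := fun n => by rw [← smul_pow, hv, one_pow]
  choose p hp using fun n => hπ (v ^ n)
  have : ∀ n, ∃ k, d₁ k = p n - s • p (n + 1) := fun n => h₁ _ (by
    rw [map_sub, map_smul, hp, hp, pow_succ, ← mul_smul_comm, hv, mul_one, sub_self])
  choose k hk using this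
  obtain ⟨x, hx⟩ := hsol (fun n => f (k n))
  have raise : ∀ n j, ∃ a, p n = s ^ j • p (n + j) + d₁ a ∧ x n = s ^ j • x (n + j) + f a := by
    intro n j
    induction j with
    | zero => exact ⟨0, by simp, by simp⟩
    | succ j ih =>
      obtain ⟨a, h, h'⟩ := ih
      refine ⟨a + s ^ j • k (n + j), ?_, ?_⟩
      · rw [h, map_add, map_smul, hk, pow_succ, mul_smul, smul_sub, ← add_assoc n]; abel
      · rw [h', hx (n + j), map_add, map_smul, pow_succ, mul_smul, smul_add, ← add_assoc n]; abel
  let G : Submodule R (P₀ × C) :=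
    { carrier := {q | ∃ (n : ℕ) (r : R) (a : P₁), q.1 = r • p n + d₁ a ∧ q.2 = r • x n + f a}
      zero_mem' := ⟨0, 0, 0, by simp, by simp⟩
      smul_mem' := by
        rintro t q ⟨n, r, a, h, h'⟩
        exact ⟨n, t * r, t • a, by simp [h, mul_smul], by simp [h', mul_smul]⟩
      add_mem' := by
        rintro q q' ⟨n, r, a, h, h'⟩ ⟨m, t, b, g, g'⟩
        obtain ⟨u, hu, hu'⟩ := raise n m
        obtain ⟨w, hw, hw'⟩ := raise m n
        rw [add_comm m n] at hw hw'
        refine ⟨n + m, r * s ^ m + t * s ^ n, r • u + t • w + a + b, ?_, ?_⟩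
        · simp only [Prod.fst_add, h, g, map_add, map_smul, add_smul, mul_smul]
          rw [hu, hw]; simp only [smul_add]; abel
        · simp only [Prod.snd_add, h', g', map_add, map_smul, add_smul, mul_smul]
          rw [hu', hw']; simp only [smul_add]; abel }
  have hinj : ∀ q ∈ G, q.1 = 0 → q.2 = 0 := by
    rintro q ⟨n, r, a, h, h'⟩ h0
    rw [h0] at h
    have e : algebraMap R (Localization.Away s) r = 0 := by
      have e1 := congrArg π h
      rw [map_zero, map_add, hd, add_zero, map_smul, hp] at e1
      have e2 := congrArg (fun z => s ^ n • z) e1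
      simp only [smul_zero] at e2
      rw [smul_comm, hv'] at e2
      rw [Algebra.algebraMap_eq_smul_one, ← e2]
    rw [IsLocalization.map_eq_zero_iff (Submonoid.powers s)] at e
    obtain ⟨⟨_, j, rfl⟩, hj⟩ := e
    simp only at hj
    obtain ⟨u, hu, hu'⟩ := raise n j
    have hj' : r * s ^ j = 0 := by rw [mul_comm]; exact hj
    rw [hu, smul_add, ← mul_smul, hj', zero_smul, zero_add, ← map_smul, ← map_add] at h
    rw [h', hu', smul_add, ← mul_smul, hj', zero_smul, zero_add, ← map_smul, ← map_add]
    obtain ⟨b, hb⟩ := h₂ _ h.symm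
    rw [← hb, hf]
  have hsurj : ∀ y, ∃ c, (y, c) ∈ G := by
    intro y
    obtain ⟨⟨r, ⟨_, n, rfl⟩⟩, hr⟩ := IsLocalization.surj (Submonoid.powers s) (π y)
    simp only at hr
    have e : π (y - r • p n) = 0 := by
      rw [map_sub, map_smul, hp, sub_eq_zero]
      calc π y = π y * (s ^ n • v ^ n) := by rw [hv', mul_one]
        _ = (π y * algebraMap R _ (s ^ n)) * v ^ n := by rw [Algebra.smul_def, mul_assoc]
        _ = r • v ^ n := by rw [hr, Algebra.smul_def]
    obtain ⟨a, ha⟩ := h₁ _ e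
    exact ⟨r • x n + f a, n, r, a, by simp [ha], rfl⟩
  have huniq : ∀ y c c', (y, c) ∈ G → (y, c') ∈ G → c = c' := fun y c c' h h' => by
    have := hinj _ (G.sub_mem h h') (by simp)
    simpa [sub_eq_zero] using this
  choose g hg using hsurj
  refine ⟨{ toFun := g
            map_add' := fun y z => huniq _ _ _ (hg _) (G.add_mem (hg y) (hg z))
            map_smul' := fun t y => huniq _ _ _ (hg _) (G.smul_mem t (hg y)) }, fun a => ?_⟩
  exact huniq _ _ _ (hg _) ⟨0, 0, a, by simp, by simp⟩

/-- Over a commutative ring `R`, if an `R`-module `C` is `s`-torsion-free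
(multiplication by `s` is injective) and the natural map `C → lim_n C/sⁿC` is surjective,
then `Ext¹_R(R[s⁻¹], C) = 0`. -/
theorem sTorsionFree_sComplete_implies_sContraadjusted
    (R : Type) [CommRing R] (s : R) (C : Type) [AddCommGroup C] [Module R C]
    (htf : Function.Injective (fun x : C => s • x))
    (hcomp : Function.Surjective (AdicCompletion.of (Ideal.span {s}) C)) :
    Subsingleton (((Ext R (ModuleCat R) 1).obj
      (op (ModuleCat.of R (Localization.Away s)))).obj (ModuleCat.of R C)) := by
  let P := projectiveResolution (ModuleCat.of R (Localization.Away s))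
  rw [← ModuleCat.isZero_iff_subsingleton]
  refine Limits.IsZero.of_iso ?_ (P.isoExt 1 (ModuleCat.of R C))
  rw [← HomologicalComplex.exactAt_iff_isZero_homology,
    HomologicalComplex.exactAt_iff' _ 0 1 2 (by simp) (by simp)]
  rw [ShortComplex.moduleCat_exact_iff]
  intro (f : P.complex.X 1 ⟶ ModuleCat.of R C) (hf : P.complex.d 2 1 ≫ f = 0)
  have e₂ := (ShortComplex.moduleCat_exact_iff _).1 (P.exact_succ 0)
  have e₁ := (ShortComplex.moduleCat_exact_iff _).1 P.exact₀
  have hπ : Function.Surjective (P.π.f 0) := (ModuleCat.epi_iff_surjective _).1 inferInstance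
  obtain ⟨g, hg⟩ := aux_extend s (aux_solve s htf hcomp) (P.complex.d 2 1).hom
    (P.complex.d 1 0).hom (P.π.f 0).hom e₂ e₁
    (fun a => ConcreteCategory.congr_hom P.complex_d_comp_π_f_zero a) hπ f.hom
    (fun b => ConcreteCategory.congr_hom hf b)
  refine ⟨(ModuleCat.ofHom g : P.complex.X 0 ⟶ ModuleCat.of R C), ?_⟩
  change P.complex.d 1 0 ≫ ModuleCat.ofHom g = f
  ext a
  exact hg a
end

section
/- Let R be a commutative ring, I ⊂ R an ideal, and C an R-module. Then the I-adic completion Λ_I(C) = lim_{n≥1} C/IⁿC is an s-contramodule for every s ∈ I. -/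
open CategoryTheory Opposite

theorem contra_lift {R F P₁ P₀ : Type} [CommRing R] [AddCommGroup F] [Module R F]
    [AddCommGroup P₁] [Module R P₁] [AddCommGroup P₀] [Module R P₀] [Module.Projective R F]
    (d : P₁ →ₗ[R] P₀) (g : F →ₗ[R] P₀) (h : ∀ x, ∃ y, d y = g x) :
    ∃ k : F →ₗ[R] P₁, ∀ x, d (k x) = g x := by
  obtain ⟨k, hk⟩ := Module.projective_lifting_property d.rangeRestrict
    (g.codRestrict (LinearMap.range d) h) d.surjective_rangeRestrict
  refine ⟨k, fun x => ?_⟩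
  exact congrArg Subtype.val (LinearMap.congr_fun hk x)

theorem contra_core {R F P₂ P₁ P₀ L D : Type} [CommRing R] [AddCommGroup F] [Module R F]
    [AddCommGroup P₁] [Module R P₁] [AddCommGroup P₀] [Module R P₀]
    [AddCommGroup P₂] [Module R P₂] [AddCommGroup L] [Module R L] [AddCommGroup D] [Module R D]
    [Module.Projective R F] [Module.Projective R P₀]
    (d₂ : P₂ →ₗ[R] P₁) (d₁ : P₁ →ₗ[R] P₀) (p : P₀ →ₗ[R] L)
    (h₁ : ∀ x, d₁ x = 0 → ∃ y, d₂ y = x) (h₀ : ∀ x, p x = 0 → ∃ y, d₁ y = x)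
    (hpd : ∀ x, p (d₁ x) = 0) (hp : Function.Surjective p)
    (q : F →ₗ[R] L) (m : F →ₗ[R] F) (hq : Function.Surjective q) (hqm : ∀ x, q (m x) = 0)
    (hm : ∀ x, q x = 0 → ∃ y, m y = x)
    (hext : ∀ g : F →ₗ[R] D, ∃ β : F →ₗ[R] D, ∀ x, β (m x) = g x)
    (φ : P₁ →ₗ[R] D) (hφ : ∀ x, φ (d₂ x) = 0) :
    ∃ ψ : P₀ →ₗ[R] D, ∀ x, ψ (d₁ x) = φ x := by
  obtain ⟨a, ha⟩ := contra_lift p q (fun x => hp (q x))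
  obtain ⟨b, hb⟩ := contra_lift q p (fun x => hq (p x))
  obtain ⟨c, hc⟩ := contra_lift d₁ (a ∘ₗ b - LinearMap.id)
    (fun x => h₀ _ (by simp [ha, hb]))
  obtain ⟨e, he⟩ := contra_lift d₁ (a ∘ₗ m) (fun x => h₀ _ (by simp [ha, hqm]))
  obtain ⟨β, hβ⟩ := hext (φ ∘ₗ e)
  refine ⟨β ∘ₗ b - φ ∘ₗ c, fun w => ?_⟩
  obtain ⟨u, hu⟩ := hm (b (d₁ w)) (by rw [hb, hpd])
  obtain ⟨y, hy⟩ := h₁ (e u - c (d₁ w) - w) (by simp [he, hc, hu])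
  have h := hφ y
  rw [hy, map_sub, map_sub, sub_eq_zero] at h
  simp only [LinearMap.sub_apply, LinearMap.comp_apply, ← hu, hβ]
  exact h

theorem contra_pow_smul {R C : Type} [CommRing R] [AddCommGroup C] [Module R C] (I : Ideal R)
    {s : R} (hs : s ∈ I) {n k : ℕ} (h : n ≤ k)
    (x : C ⧸ (I ^ n • ⊤ : Submodule R C)) : s ^ k • x = 0 := by
  obtain ⟨c, rfl⟩ := Submodule.Quotient.mk_surjective _ x
  rw [← Submodule.Quotient.mk_smul, Submodule.Quotient.mk_eq_zero]
  exact Submodule.smul_mem_smul (Ideal.pow_le_pow_right h (Ideal.pow_mem_pow hs k)) trivial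

/-- The sum `∑ s^k g_k` in the completion. -/
noncomputable def contraSum {R C : Type} [CommRing R] [AddCommGroup C] [Module R C] (I : Ideal R)
    {s : R} (hs : s ∈ I) (g : ℕ → AdicCompletion I C) : AdicCompletion I C :=
  ⟨fun n => ∑ k ∈ Finset.range n, s ^ k • (g k).val n, by
    intro m n hmn
    rw [map_sum]
    simp only [map_smul]
    have : ∀ k, AdicCompletion.transitionMap I C hmn ((g k).val n) = (g k).val m :=
      fun k => (g k).property hmn
    simp only [this]
    symm
    apply Finset.sum_subset (Finset.range_mono hmn)
    intro k _ hk
    exact contra_pow_smul I hs (by simpa using hk) _⟩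

theorem contraSum_eq {R C : Type} [CommRing R] [AddCommGroup C] [Module R C] (I : Ideal R)
    {s : R} (hs : s ∈ I) (g : ℕ → AdicCompletion I C) :
    contraSum I hs g = g 0 + s • contraSum I hs (fun k => g (k + 1)) := by
  apply AdicCompletion.ext
  intro n
  change ∑ k ∈ Finset.range n, s ^ k • (g k).val n = (g 0).val n +
    s • ∑ k ∈ Finset.range n, s ^ k • (g (k + 1)).val n
  have h := Finset.sum_range_succ (fun k => s ^ k • (g k).val n) n
  rw [contra_pow_smul I hs le_rfl, add_zero] at h
  rw [← h, Finset.sum_range_succ', Finset.smul_sum, add_comm]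
  simp [pow_succ', mul_smul]

theorem contra_ext {R C : Type} [CommRing R] [AddCommGroup C] [Module R C] (I : Ideal R)
    {s : R} (hs : s ∈ I) (g : Polynomial R →ₗ[R] AdicCompletion I C) :
    ∃ β : Polynomial R →ₗ[R] AdicCompletion I C, ∀ x,
      β (LinearMap.mulLeft R (Polynomial.C s * Polynomial.X - 1) x) = g x := by
  let f : ℕ → AdicCompletion I C := fun n =>
    - contraSum I hs (fun k => g (Polynomial.monomial (n + k) 1))
  have hf : ∀ n, s • f (n + 1) - f n = g (Polynomial.monomial n 1) := by
    intro n
    simp only [f]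
    rw [contraSum_eq I hs (fun k => g (Polynomial.monomial (n + k) 1))]
    simp only [add_zero, smul_neg, add_assoc, add_comm 1]
    abel
  let β := (Polynomial.basisMonomials R).constr R f
  have hβ : ∀ n, β (Polynomial.monomial n 1) = f n := by
    intro n
    have := (Polynomial.basisMonomials R).constr_basis R f n
    simpa using this
  refine ⟨β, fun x => ?_⟩
  have : β ∘ₗ LinearMap.mulLeft R (Polynomial.C s * Polynomial.X - 1) = g := by
    apply (Polynomial.basisMonomials R).ext
    intro n
    rw [Polynomial.coe_basisMonomials, LinearMap.comp_apply, LinearMap.mulLeft_apply, ← hf, ← hβ,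
      ← hβ, ← map_smul, ← map_sub]
    congr 1
    rw [sub_mul, one_mul, mul_assoc, Polynomial.X_mul_monomial, Polynomial.smul_eq_C_mul]
  exact LinearMap.congr_fun this x

theorem contra_hom {R C : Type} [CommRing R] [AddCommGroup C] [Module R C] (I : Ideal R)
    {s : R} (hs : s ∈ I) (f : Localization.Away s →ₗ[R] AdicCompletion I C) : f = 0 := by
  ext x n
  have hu : IsUnit (algebraMap R (Localization.Away s) s ^ n) :=
    (IsLocalization.Away.algebraMap_isUnit s).pow n
  obtain ⟨y, hy⟩ := hu.dvd (a := x)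
  have : x = s ^ n • y := by rw [hy, Algebra.smul_def, map_pow]
  rw [this, map_smul, AdicCompletion.val_smul_apply, contra_pow_smul I hs le_rfl]
  rfl

theorem contra_ext_zero {R : Type} [CommRing R] (L D : ModuleCat.{0} R)
    (q : Polynomial R →ₗ[R] L) (m : Polynomial R →ₗ[R] Polynomial R)
    (hq : Function.Surjective q) (hqm : ∀ x, q (m x) = 0)
    (hm : ∀ x, q x = 0 → ∃ y, m y = x)
    (hext : ∀ g : Polynomial R →ₗ[R] D, ∃ β : Polynomial R →ₗ[R] D, ∀ x, β (m x) = g x) :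
    Subsingleton (((Ext R (ModuleCat R) 1).obj (op L)).obj D) := by
  let P := ProjectiveResolution.of L
  rw [← ModuleCat.isZero_iff_subsingleton]
  refine Limits.IsZero.of_iso ?_ (P.isoExt 1 D)
  rw [← HomologicalComplex.exactAt_iff_isZero_homology,
    HomologicalComplex.exactAt_iff' _ 0 1 2 (by simp) (by simp),
    ShortComplex.moduleCat_exact_iff]
  intro (φ : P.complex.X 1 ⟶ D) hφ
  have hφ' : P.complex.d 2 1 ≫ φ = 0 := hφ
  have e1 := P.exact_succ 0
  have e0 := P.exact₀
  rw [ShortComplex.moduleCat_exact_iff] at e1 e0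
  have : Module.Projective R (P.complex.X 0) :=
    (IsProjective.iff_projective (R := R) (P.complex.X 0)).2 (P.projective 0)
  have hs : Function.Surjective (P.π.f 0) := (ModuleCat.epi_iff_surjective _).1 inferInstance
  obtain ⟨ψ, hψ⟩ := contra_core (L := L) (P.complex.d 2 1).hom (P.complex.d 1 0).hom (P.π.f 0).hom
    e1 e0 (fun x => LinearMap.congr_fun (congrArg ModuleCat.Hom.hom P.complex_d_comp_π_f_zero) x)
    hs q m hq hqm hm hext φ.hom
    (fun x => LinearMap.congr_fun (congrArg ModuleCat.Hom.hom hφ') x)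
  refine ⟨(ModuleCat.ofHom ψ : P.complex.X 0 ⟶ D), ?_⟩
  change P.complex.d 1 0 ≫ ModuleCat.ofHom ψ = φ
  ext x
  exact hψ x

/-- For a commutative ring `R`, an ideal `I ⊆ R` and an `R`-module `C`,
the `I`-adic completion `Λ_I(C) = lim_n C/IⁿC` is an `s`-contramodule for every `s ∈ I`:
`Hom_R(R[s⁻¹], Λ_I(C)) = 0 = Ext¹_R(R[s⁻¹], Λ_I(C))`. -/
theorem adicCompletion_isContramodule
    (R : Type) [CommRing R] (I : Ideal R) (C : Type) [AddCommGroup C] [Module R C]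
    (s : R) (hs : s ∈ I) :
    Subsingleton (Localization.Away s →ₗ[R] AdicCompletion I C) ∧
      Subsingleton (((Ext R (ModuleCat R) 1).obj
        (op (ModuleCat.of R (Localization.Away s)))).obj
        (ModuleCat.of R (AdicCompletion I C))) := by
  refine ⟨⟨fun f g => by rw [contra_hom I hs f, contra_hom I hs g]⟩, ?_⟩
  let e := Localization.awayEquivAdjoin s
  let q : Polynomial R →ₗ[R] Localization.Away s :=
    (e.symm.toAlgHom.comp (AdjoinRoot.mkₐ (Polynomial.C s * Polynomial.X - 1))).toLinearMap
  have hq : ∀ x, q x = e.symm (AdjoinRoot.mk _ x) := fun x => rfl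
  refine contra_ext_zero (ModuleCat.of R (Localization.Away s))
    (ModuleCat.of R (AdicCompletion I C)) q
    (LinearMap.mulLeft R (Polynomial.C s * Polynomial.X - 1)) ?_ ?_ ?_ (contra_ext I hs)
  · exact e.symm.surjective.comp AdjoinRoot.mk_surjective
  · intro x
    rw [hq]
    simp
  · intro x hx
    rw [hq, EmbeddingLike.map_eq_zero_iff, AdjoinRoot.mk_eq_zero] at hx
    obtain ⟨y, rfl⟩ := hx
    exact ⟨y, rfl⟩
end

section
/- Let R be a commutative ring, s ∈ R an element that is not a zero-divisor, and C an R-module. Then the cokernel of the map φ : Π_{n≥1} C → Π_{n≥0} C, sending (c₁,c₂,…) to (bₙ) with bₙ = cₙ − s·cₙ₊₁ (where c₀ = 0), is naturally isomorphic to Ext¹_R(R[s⁻¹]/R, C). -/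
open CategoryTheory Opposite

/-- The map `φ : Π_{n≥1} C → Π_{n≥0} C` sending `(c₁, c₂, …)` to `(bₙ)` with
`bₙ = cₙ - s·cₙ₊₁` (where `c₀ = 0`). Here the domain sequence `c : ℕ → C` represents
`(c₁, c₂, …)`, i.e. `c i = c_{i+1}`. -/
def phiMap (R : Type) [CommRing R] (C : Type) [AddCommGroup C] [Module R C] (s : R) :
    (ℕ → C) →ₗ[R] (ℕ → C) where
  toFun c := fun n => (if n = 0 then 0 else c (n - 1)) - s • c n
  map_add' c d := by
    funext n
    by_cases h : n = 0 <;> simp [h, smul_add] <;> abel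
  map_smul' r c := by
    funext n
    by_cases h : n = 0 <;> simp [h, smul_sub, smul_comm r s]


section
open Limits ZeroObject

variable {A : Type*} [Category* A] [Abelian A]

/-- two-term complex -/
noncomputable def twoTermComplex (S : ShortComplex A) : ChainComplex A ℕ :=
  ChainComplex.mk' S.X₂ S.X₁ S.f (fun {_ _} _ => ⟨(0 : A), 0, zero_comp⟩)

lemma twoTermComplex_d_1_0 (S : ShortComplex A) : (twoTermComplex S).d 1 0 = S.f := by
  exact ChainComplex.mk'_d_1_0 _ _ _ _

lemma twoTermComplex_isZero (S : ShortComplex A) (n : ℕ) :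
    IsZero ((twoTermComplex S).X (n + 2)) :=
  (isZero_zero A).of_iso
    (ChainComplex.mk'XIso S.X₂ S.X₁ S.f (fun {_ _} _ => ⟨(0 : A), 0, zero_comp⟩) n)

lemma twoTermComplex_exactAt_succ (S : ShortComplex A) [hm : Mono S.f] (n : ℕ) :
    (twoTermComplex S).ExactAt (n + 1) := by
  rw [HomologicalComplex.exactAt_iff' _ (n + 1 + 1) (n + 1) n (by simp) (by simp)]
  cases n with
  | zero =>
    rw [ShortComplex.exact_iff_mono]
    · have h : ((twoTermComplex S).sc' (0 + 1 + 1) (0 + 1) 0).g = S.f := twoTermComplex_d_1_0 S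
      rw [h]; exact hm
    · exact (twoTermComplex_isZero S 0).eq_of_src _ _
  | succ n => exact ShortComplex.exact_of_isZero_X₂ _ (twoTermComplex_isZero S n)

/-- A short exact sequence with projective left and middle terms gives a projective resolution. -/
noncomputable def twoTermResolution (S : ShortComplex A) (hS : S.ShortExact)
    (h1 : Projective S.X₁) (h2 : Projective S.X₂) : ProjectiveResolution S.X₃ where
  complex := twoTermComplex S
  projective n := by
    match n with
    | 0 => exact h2
    | 1 => exact h1
    | n + 2 => exact Projective.of_iso (twoTermComplex_isZero S n).isoZero.symm inferInstance
  π := (ChainComplex.toSingle₀Equiv _ _).symm ⟨S.g, by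
    rw [twoTermComplex_d_1_0]; exact S.zero⟩
  quasiIso := ⟨fun n => by
    have := hS.mono_f
    have := hS.epi_g
    cases n
    · rw [ChainComplex.quasiIsoAt₀_iff, ShortComplex.quasiIso_iff_of_zeros']
      · refine (ShortComplex.exact_and_epi_g_iff_of_iso ?_).2 ⟨hS.exact, hS.epi_g⟩
        refine ShortComplex.isoMk (Iso.refl _) (Iso.refl _) (Iso.refl _) ?_ ?_
        · exact (Category.id_comp _).trans ((twoTermComplex_d_1_0 S).symm.trans (Category.comp_id _).symm)
        · refine (Category.id_comp _).trans (Eq.trans ?_ (Category.comp_id _).symm)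
          exact (ChainComplex.toSingle₀Equiv_symm_apply_f_zero (C := twoTermComplex S) S.g _).symm
      all_goals rfl
    · rw [quasiIsoAt_iff_exactAt']
      · apply twoTermComplex_exactAt_succ
      · apply ChainComplex.exactAt_succ_single_obj⟩
end

lemma ext1_of_shortExact {R : Type} [CommRing R] (S : ShortComplex (ModuleCat.{0} R))
    (hS : S.ShortExact)
    (h1 : Projective S.X₁) (h2 : Projective S.X₂) (Y : ModuleCat.{0} R) :
    Nonempty (((S.X₁ ⟶ Y) ⧸ LinearMap.range (Linear.leftComp R Y S.f)) ≃ₗ[R]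
      ((Ext R (ModuleCat R) 1).obj (op S.X₃)).obj Y) := by
  let P := twoTermResolution S hS h1 h2
  let K := P.complex.linearYonedaObj R Y
  let i1 := P.isoExt (R := R) 1 Y
  let i2 : K.homology 1 ≅ (K.sc' 0 1 2).homology := K.homologyIsoSc' 0 1 2 (by simp) (by simp)
  have hg : (K.sc' 0 1 2).g = 0 := by
    ext (x : _ ⟶ _)
    exact (twoTermComplex_isZero S 0).eq_of_src (Y := Y) _ _
  let i3 := (K.sc' 0 1 2).asIsoHomologyι hg
  let i4 := (K.sc' 0 1 2).moduleCatOpcyclesIso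
  have hf : (K.sc' 0 1 2).f.hom = Linear.leftComp R Y S.f := by
    ext (x : _ ⟶ _)
    have h : P.complex.d 1 0 = S.f := twoTermComplex_d_1_0 S
    change P.complex.d 1 0 ≫ x = S.f ≫ x
    rw [h]
    rfl
  have e := (i1 ≪≫ i2 ≪≫ i3 ≪≫ i4).symm.toLinearEquiv
  let e0 : (S.X₁ ⟶ Y) ≃ₗ[R] (K.sc' 0 1 2).X₂ := LinearEquiv.refl R (S.X₁ ⟶ Y)
  have hq : (LinearMap.range (Linear.leftComp R Y S.f)).map (e0 : (S.X₁ ⟶ Y) →ₗ[R] _) =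
      LinearMap.range (K.sc' 0 1 2).f.hom := by
    rw [hf]
    exact Submodule.map_id _
  exact ⟨(Submodule.Quotient.equiv _ _ e0 hq).trans e⟩

section resolution

variable (R : Type) [CommRing R] (s : R)

/-- The differential of the resolution: `f₀ ↦ -s e₀`, `fₙ₊₁ ↦ eₙ - s eₙ₊₁`. -/
noncomputable def awayD : (ℕ →₀ R) →ₗ[R] (ℕ →₀ R) :=
  Finsupp.llift _ R R ℕ (phiMap R (ℕ →₀ R) s (fun n => Finsupp.single n 1))

/-- The augmentation `eₙ ↦ 1 / s ^ (n + 1)`. -/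
noncomputable def awayG : (ℕ →₀ R) →ₗ[R]
    ((Localization.Away s) ⧸ LinearMap.range (Algebra.linearMap R (Localization.Away s))) :=
  Submodule.mkQ _ ∘ₗ Finsupp.llift _ R R ℕ
    (fun n => (IsLocalization.Away.invSelf s : Localization.Away s) ^ (n + 1))

lemma awayD_single (n : ℕ) (r : R) : awayD R s (Finsupp.single n r) =
    (if n = 0 then 0 else Finsupp.single (n - 1) r) - Finsupp.single n (s * r) := by
  by_cases h : n = 0 <;> simp [awayD, phiMap, h, smul_sub, mul_comm]

lemma awayD_apply (a : ℕ →₀ R) (m : ℕ) : awayD R s a m = a (m + 1) - s * a m := by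
  induction a using Finsupp.induction_linear with
  | zero => simp
  | add f g hf hg => simp [hf, hg]; ring
  | single n r =>
    rw [awayD_single]
    rcases n with _ | n
    · simp [Finsupp.single_apply]
      exact fun h h' => absurd h' h
    · simp [Finsupp.single_apply]
      exact fun h h' => absurd h' h

lemma awayD_injective (hs : s ∈ nonZeroDivisors R) : Function.Injective (awayD R s) := by
  rw [injective_iff_map_eq_zero]
  intro a ha
  have h1 : ∀ m, a (m + 1) = s * a m := fun m => by
    have := DFunLike.congr_fun ha m
    rw [awayD_apply] at this
    exact sub_eq_zero.1 this
  have h2 : ∀ m k, a (m + k) = s ^ k * a m := by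
    intro m k
    induction k with
    | zero => simp
    | succ k ih => rw [← add_assoc, h1, ih]; ring
  ext m
  obtain ⟨N, hN⟩ := a.support.bddAbove
  have h3 : a (m + (N + 1)) = 0 := by
    by_contra h
    have := hN (Finset.mem_coe.2 (Finsupp.mem_support_iff.2 h))
    omega
  rw [h2, mul_comm] at h3
  exact (mem_nonZeroDivisors_iff_right.1 (pow_mem hs (N + 1))) _ h3

lemma awayQ_succ (n : ℕ) (r : R) :
    (LinearMap.range (awayD R s)).mkQ (Finsupp.single (n + 1) (s * r)) =
      (LinearMap.range (awayD R s)).mkQ (Finsupp.single n r) := by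
  symm
  rw [← sub_eq_zero, ← map_sub, Submodule.mkQ_apply, Submodule.Quotient.mk_eq_zero]
  exact ⟨Finsupp.single (n + 1) r, by rw [awayD_single]; simp⟩

lemma awayQ_add (n k : ℕ) (r : R) :
    (LinearMap.range (awayD R s)).mkQ (Finsupp.single (n + k) (s ^ k * r)) =
      (LinearMap.range (awayD R s)).mkQ (Finsupp.single n r) := by
  induction k with
  | zero => simp
  | succ k ih => rw [← ih, ← awayQ_succ R s (n + k), ← add_assoc, pow_succ', mul_assoc]

lemma awayQ_zero (n : ℕ) (r : R) :
    (LinearMap.range (awayD R s)).mkQ (Finsupp.single n (s ^ (n + 1) * r)) = 0 := by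
  have h := awayQ_add R s 0 n (s * r)
  rw [zero_add, ← mul_assoc, ← pow_succ] at h
  rw [h, Submodule.mkQ_apply, Submodule.Quotient.mk_eq_zero]
  exact ⟨Finsupp.single 0 (-r), by rw [awayD_single]; simp⟩

lemma awayQ_exists (b : ℕ →₀ R) : ∃ N r,
    (LinearMap.range (awayD R s)).mkQ b =
      (LinearMap.range (awayD R s)).mkQ (Finsupp.single N r) := by
  induction b using Finsupp.induction_linear with
  | zero => exact ⟨0, 0, by simp⟩
  | add f g hf hg =>
    obtain ⟨N, r, h⟩ := hf
    obtain ⟨M, t, h'⟩ := hg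
    refine ⟨N + M, s ^ M * r + s ^ N * t, ?_⟩
    rw [map_add, h, h', Finsupp.single_add, map_add, awayQ_add, add_comm N M, awayQ_add]
  | single n r => exact ⟨n, r, rfl⟩

lemma awayG_single (n : ℕ) (r : R) : awayG R s (Finsupp.single n r) =
    Submodule.Quotient.mk
      (r • (IsLocalization.Away.invSelf s : Localization.Away s) ^ (n + 1)) := by
  simp [awayG]

lemma smul_invSelf_pow (n : ℕ) (r : R) :
    (s ^ n * r) • (IsLocalization.Away.invSelf s : Localization.Away s) ^ n =
      algebraMap R _ r := by
  have h := IsLocalization.Away.mul_invSelf (S := Localization.Away s) s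
  rw [Algebra.smul_def, map_mul, map_pow, mul_right_comm, ← mul_pow, h, one_pow, one_mul]

lemma awayG_comp_awayD (a : ℕ →₀ R) : awayG R s (awayD R s a) = 0 := by
  induction a using Finsupp.induction_linear with
  | zero => simp
  | add f g hf hg => simp [hf, hg]
  | single n r =>
    have h := IsLocalization.Away.mul_invSelf (S := Localization.Away s) s
    rw [awayD_single, map_sub]
    rcases n with _ | n
    · rw [awayG_single]
      have := smul_invSelf_pow R s 1 r
      rw [pow_one] at this
      simp only [if_true, map_zero, zero_sub, neg_eq_zero, zero_add]
      rw [this, Submodule.Quotient.mk_eq_zero]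
      exact ⟨r, rfl⟩
    · simp only [Nat.succ_ne_zero, if_false, Nat.add_sub_cancel]
      rw [awayG_single, awayG_single, sub_eq_zero]
      congr 1
      rw [Algebra.smul_def, Algebra.smul_def, map_mul, pow_succ _ (n + 1)]
      linear_combination (-(algebraMap R (Localization.Away s) r) *
        (IsLocalization.Away.invSelf s : Localization.Away s) ^ (n + 1)) * h

lemma awayG_surjective : Function.Surjective (awayG R s) := by
  intro z
  obtain ⟨z, rfl⟩ := Submodule.Quotient.mk_surjective _ z
  obtain ⟨n, a, h⟩ := IsLocalization.Away.surj s z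
  refine ⟨Finsupp.single n (s * a), ?_⟩
  rw [awayG_single]
  congr 1
  have h' := smul_invSelf_pow R s (n + 1) 1
  rw [mul_one, map_one, Algebra.smul_def, map_pow] at h'
  rw [Algebra.smul_def, map_mul, ← h]
  linear_combination z * h'

lemma awayG_exact (hs : s ∈ nonZeroDivisors R) : Function.Exact (awayD R s) (awayG R s) := by
  intro b
  constructor
  · intro hb
    obtain ⟨N, r, h⟩ := awayQ_exists R s b
    have hr : awayG R s (Finsupp.single N r) = 0 := by
      rw [← sub_eq_zero, ← map_sub, Submodule.mkQ_apply, Submodule.Quotient.mk_eq_zero] at h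
      obtain ⟨a, ha⟩ := h
      have := awayG_comp_awayD R s a
      rw [ha, map_sub, hb, zero_sub, neg_eq_zero] at this
      exact this
    rw [awayG_single, Submodule.Quotient.mk_eq_zero] at hr
    obtain ⟨t, ht⟩ := hr
    have hrt : r = s ^ (N + 1) * t := by
      apply IsLocalization.injective (Localization.Away s) (M := Submonoid.powers s)
        (Submonoid.powers_le.2 hs)
      have h' := smul_invSelf_pow R s (N + 1) 1
      rw [mul_one, map_one, Algebra.smul_def, map_pow] at h'
      rw [Algebra.linearMap_apply, Algebra.smul_def] at ht
      rw [map_mul, map_pow, ht]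
      linear_combination -(algebraMap R (Localization.Away s) r) * h'
    rw [hrt, awayQ_zero, Submodule.mkQ_apply, Submodule.Quotient.mk_eq_zero] at h
    exact h
  · rintro ⟨a, rfl⟩
    exact awayG_comp_awayD R s a

/-- Naturality of `phiMap`. -/
lemma comp_awayD (C : Type) [AddCommGroup C] [Module R C] (f : (ℕ →₀ R) →ₗ[R] C) :
    (Finsupp.llift C R R ℕ).symm (f ∘ₗ awayD R s) =
      phiMap R C s ((Finsupp.llift C R R ℕ).symm f) := by
  funext n
  by_cases h : n = 0 <;> simp [phiMap, awayD, h, ← map_smul]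

end resolution

/-- Let `R` be a commutative ring, `s ∈ R` a nonzerodivisor and `C` an
`R`-module. The cokernel of `φ : Π_{n≥1} C → Π_{n≥0} C`, `(cₙ) ↦ (cₙ - s·cₙ₊₁)` (with
`c₀ = 0`), is naturally isomorphic to `Ext¹_R(R[s⁻¹]/R, C)`. -/
theorem coker_phiMap_iso_ext1
    (R : Type) [CommRing R] (s : R) (hs : s ∈ nonZeroDivisors R)
    (C : Type) [AddCommGroup C] [Module R C] :
    Nonempty ((((ℕ → C) ⧸ LinearMap.range (phiMap R C s))) ≃ₗ[R]
      (((Ext R (ModuleCat R) 1).obj (op (ModuleCat.of R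
        ((Localization.Away s) ⧸
          LinearMap.range (Algebra.linearMap R (Localization.Away s)))))).obj
        (ModuleCat.of R C))) := by
  let S : ShortComplex (ModuleCat.{0} R) := ShortComplex.mk
    (ModuleCat.ofHom (awayD R s)) (ModuleCat.ofHom (awayG R s)) (by
      ext1
      exact LinearMap.ext (awayG_comp_awayD R s))
  have hS : S.ShortExact := ModuleCat.shortComplex_shortExact S (awayG_exact R s hs)
    (awayD_injective R s hs) (awayG_surjective R s)
  have hP : Projective (ModuleCat.of R (ℕ →₀ R)) :=
    ModuleCat.projective_of_free (Finsupp.basisSingleOne (R := R) (ι := ℕ))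
  obtain ⟨e⟩ := ext1_of_shortExact S hS hP hP (ModuleCat.of R C)
  let e0 : (S.X₁ ⟶ ModuleCat.of R C) ≃ₗ[R] (ℕ → C) :=
    ModuleCat.homLinearEquiv.trans (Finsupp.llift C R R ℕ).symm
  have key : ∀ f : S.X₂ ⟶ ModuleCat.of R C,
      e0 (Linear.leftComp R (ModuleCat.of R C) S.f f) = phiMap R C s (e0 f) := fun f =>
    comp_awayD R s C f.hom
  have hq : (LinearMap.range (Linear.leftComp R (ModuleCat.of R C) S.f)).map
      (e0 : (S.X₁ ⟶ ModuleCat.of R C) →ₗ[R] (ℕ → C)) = LinearMap.range (phiMap R C s) := by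
    ext c
    constructor
    · rintro ⟨_, ⟨f, rfl⟩, rfl⟩
      exact ⟨e0 f, (key f).symm⟩
    · rintro ⟨c, rfl⟩
      refine ⟨_, ⟨e0.symm c, rfl⟩, ?_⟩
      exact (key (e0.symm c)).trans (congrArg _ (e0.apply_symm_apply c))
  exact ⟨(Submodule.Quotient.equiv _ _ e0 hq).symm.trans e⟩
end

section
/- Let R be a Noetherian commutative ring, I ⊂ R an ideal, and C an I-adically separated and complete R-module (C ≅ lim_n C/IⁿC) such that C/IⁿC is a flat (R/Iⁿ)-module for every n ≥ 1. Then C is a flat R-module. -/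
open TensorProduct in
/-- Tensoring with `C` preserves injections of modules killed by `J`, if `C/JC` is flat over `R/J`. -/
theorem lTensor_injective_of_torsion {R : Type} [CommRing R] (J : Ideal R)
    {C : Type} [AddCommGroup C] [Module R C]
    (hfl : Module.Flat (R ⧸ J) (C ⧸ (J • ⊤ : Submodule R C)))
    {A B : Type} [AddCommGroup A] [Module R A] [AddCommGroup B] [Module R B]
    (f : A →ₗ[R] B) (hf : Function.Injective f) (hB : Module.IsTorsionBySet R B J) :
    Function.Injective (f.lTensor C) := by
  have hA : Module.IsTorsionBySet R A J := by
    intro a r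
    apply hf
    have := @hB (f a) r
    simpa using this
  letI := hA.module
  letI := hB.module
  have sA : IsScalarTower R (R ⧸ J) A := hA.isScalarTower
  have sB : IsScalarTower R (R ⧸ J) B := hB.isScalarTower
  have hs : Function.Surjective (algebraMap R (R ⧸ J)) := Ideal.Quotient.mk_surjective
  let g : A →ₗ[R ⧸ J] B :=
    { f with
      map_smul' := by
        intro s a
        obtain ⟨r, rfl⟩ := hs s
        simp [algebraMap_smul] }
  let e₀ := quotTensorEquivQuotSMul C J
  let e : (R ⧸ J) ⊗[R] C ≃ₗ[R ⧸ J] C ⧸ (J • ⊤ : Submodule R C) :=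
    { e₀ with
      map_smul' := by
        intro s a
        obtain ⟨r, rfl⟩ := hs s
        simp only [algebraMap_smul]
        exact e₀.map_smul r a }
  have hfl2 : Module.Flat (R ⧸ J) ((R ⧸ J) ⊗[R] C) := Module.Flat.of_linearEquiv e
  have hg : Function.Injective (g.rTensor ((R ⧸ J) ⊗[R] C)) :=
    Module.Flat.rTensor_preserves_injective_linearMap g hf
  rw [LinearMap.lTensor_inj_iff_rTensor_inj]
  let cA := AlgebraTensorModule.cancelBaseChange R (R ⧸ J) (R ⧸ J) A C
  let cB := AlgebraTensorModule.cancelBaseChange R (R ⧸ J) (R ⧸ J) B C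
  have key : ∀ x, f.rTensor C x = cB (g.rTensor ((R ⧸ J) ⊗[R] C) (cA.symm x)) := by
    intro x
    induction x with
    | zero => simp
    | tmul a c => simp [cA, cB, g]
    | add x y hx hy => rw [map_add, hx, hy]; simp
  intro x y hxy
  rw [key, key] at hxy
  exact cA.symm.injective (hg (cB.injective hxy))

theorem map_mem_pow_smul {R : Type} [CommRing R] (J : Ideal R)
    {A B : Type} [AddCommGroup A] [Module R A] [AddCommGroup B] [Module R B]
    (f : A →ₗ[R] B) {x : A} (hx : x ∈ (J • ⊤ : Submodule R A)) :
    f x ∈ (J • ⊤ : Submodule R B) := by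
  have h := Submodule.mem_map_of_mem (f := f) hx
  rw [Submodule.map_smul''] at h
  exact Submodule.smul_mono le_rfl le_top h

open TensorProduct in
/-- Artin-Rees for `C ⊗ N ⊆ C ⊗ M`. -/
theorem tensor_artin_rees {R : Type} [CommRing R] [IsNoetherianRing R] (I : Ideal R)
    {C : Type} [AddCommGroup C] [Module R C]
    (hflat : ∀ n : ℕ,
      Module.Flat (R ⧸ I ^ (n + 1)) (C ⧸ (I ^ (n + 1) • ⊤ : Submodule R C)))
    {M : Type} [AddCommGroup M] [Module R M] [Module.Finite R M] (N : Submodule R M) :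
    ∃ t : ℕ, ∀ n : ℕ, ∀ y : C ⊗[R] N,
      N.subtype.lTensor C y ∈ (I ^ (n + t) • ⊤ : Submodule R (C ⊗[R] M)) →
      y ∈ (I ^ n • ⊤ : Submodule R (C ⊗[R] N)) := by
  obtain ⟨k, hk⟩ := I.exists_pow_inf_eq_pow_smul N
  refine ⟨k + 1, fun n y hy => ?_⟩
  set J := I ^ (n + (k + 1)) with hJ
  let D : Submodule R M := J • ⊤
  let D' : Submodule R N := D.comap N.subtype
  let f : (N ⧸ D') →ₗ[R] (M ⧸ D) := D'.mapQ D N.subtype le_rfl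
  have hf : Function.Injective f := by
    rw [← LinearMap.ker_eq_bot, Submodule.ker_mapQ]
    exact (Submodule.mkQ_map_self D')
  have hB : Module.IsTorsionBySet R (M ⧸ D) J := by
    intro b r
    obtain ⟨m, rfl⟩ := D.mkQ_surjective b
    rw [← map_smul, Submodule.mkQ_apply, Submodule.Quotient.mk_eq_zero]
    exact Submodule.smul_mem_smul r.2 trivial
  have hinj := lTensor_injective_of_torsion J (hflat (n + k)) f hf hB
  have hz : D'.mkQ.lTensor C y = 0 := by
    apply hinj
    rw [map_zero, ← LinearMap.comp_apply, ← LinearMap.lTensor_comp]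
    have : f ∘ₗ D'.mkQ = D.mkQ ∘ₗ N.subtype := by ext; simp [f]
    rw [this, LinearMap.lTensor_comp, LinearMap.comp_apply]
    have h2 := map_mem_pow_smul J (D.mkQ.lTensor C) hy
    have h3 : (J • ⊤ : Submodule R (C ⊗[R] (M ⧸ D))) = ⊥ := by
      rw [eq_bot_iff, Submodule.smul_le]
      intro r hr z _
      rw [Submodule.mem_bot]
      induction z with
      | zero => simp
      | tmul c b =>
        have := @hB b ⟨r, hr⟩
        rw [← TensorProduct.tmul_smul]
        simp only at this
        rw [this, TensorProduct.tmul_zero]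
      | add x y hx hy => rw [smul_add, hx trivial, hy trivial, add_zero]
    rw [h3] at h2
    simpa using h2
  have hex : Function.Exact D'.subtype D'.mkQ := LinearMap.exact_subtype_mkQ D'
  obtain ⟨w, rfl⟩ := (lTensor_exact C hex D'.mkQ_surjective y).1 hz
  clear hz hy
  induction w with
  | zero => simp
  | add x y hx hy => rw [map_add]; exact add_mem hx hy
  | tmul c d =>
    have hd : (d : N) ∈ (I ^ n • ⊤ : Submodule R N) := by
      have h1 : ((d : N) : M) ∈ (I ^ (n + (k + 1)) • ⊤ ⊓ N : Submodule R M) := ⟨d.2, (d : N).2⟩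
      rw [hk _ (by omega)] at h1
      have h2 : ((d : N) : M) ∈ (I ^ n • N : Submodule R M) :=
        Submodule.smul_mono (Ideal.pow_le_pow_right (by omega)) inf_le_right h1
      have h3 : (I ^ n • N : Submodule R M) = (I ^ n • ⊤ : Submodule R N).map N.subtype := by
        rw [Submodule.map_smul'', Submodule.map_top, Submodule.range_subtype]
      rw [h3] at h2
      obtain ⟨d', hd', h⟩ := h2
      rwa [← Subtype.ext h]
    exact map_mem_pow_smul (I ^ n) (TensorProduct.mk R C N c) hd

open TensorProduct in
theorem tensor_precomplete {R : Type} [CommRing R] (I : Ideal R)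
    {C : Type} [AddCommGroup C] [Module R C]
    (hsep : Function.Surjective (AdicCompletion.of I C))
    (M : Type) [AddCommGroup M] [Module R M] [Module.Finite R M] :
    IsPrecomplete I (C ⊗[R] M) := by
  obtain ⟨l, q, hq⟩ := Module.Finite.exists_fin' R M
  let p : (Fin l → C) →ₗ[R] C ⊗[R] M :=
    q.lTensor C ∘ₗ (TensorProduct.piScalarRight R R C (Fin l)).symm.toLinearMap
  have hp : Function.Surjective p :=
    (LinearMap.lTensor_surjective C hq).comp (LinearEquiv.surjective _)
  rw [← AdicCompletion.of_surjective_iff]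
  intro y
  obtain ⟨z, rfl⟩ := AdicCompletion.map_surjective I hp y
  choose c hc using fun j => hsep (AdicCompletion.pi I (fun _ : Fin l => C) z j)
  have : z = AdicCompletion.of I _ c := by
    apply (AdicCompletion.piEquivOfFintype I (fun _ : Fin l => C)).injective
    rw [AdicCompletion.piEquivOfFintype_apply, AdicCompletion.piEquivOfFintype_apply]
    funext j
    rw [← hc j]
    simp only [AdicCompletion.pi, LinearMap.pi_apply]
    exact AdicCompletion.ext fun n => rfl
  refine ⟨p c, ?_⟩
  rw [this]
  exact AdicCompletion.ext fun n => rfl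

open TensorProduct in
theorem tensor_hausdorff {R : Type} [CommRing R] [IsNoetherianRing R] (I : Ideal R)
    {C : Type} [AddCommGroup C] [Module R C]
    (hsep : Function.Bijective (AdicCompletion.of I C))
    (hflat : ∀ n : ℕ,
      Module.Flat (R ⧸ I ^ (n + 1)) (C ⧸ (I ^ (n + 1) • ⊤ : Submodule R C)))
    {M : Type} [AddCommGroup M] [Module R M] [Module.Finite R M]
    (x : C ⊗[R] M) (hx : ∀ n : ℕ, x ∈ (I ^ n • ⊤ : Submodule R (C ⊗[R] M))) : x = 0 := by
  obtain ⟨l, q, hq⟩ := Module.Finite.exists_fin' R M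
  have hH : IsHausdorff I C := (AdicCompletion.of_injective_iff).1 hsep.1
  let K := LinearMap.ker q
  let ι := K.subtype.lTensor C
  have hsur := LinearMap.lTensor_surjective C hq
  have hex : Function.Exact ι (q.lTensor C) :=
    lTensor_exact C (LinearMap.exact_subtype_ker_map q) hq
  have hP := tensor_precomplete I hsep.2 K
  obtain ⟨t, ht⟩ := tensor_artin_rees I hflat K
  obtain ⟨z, rfl⟩ := hsur x
  have hκ : ∀ n : ℕ, ∃ κ : C ⊗[R] K,
      z - ι κ ∈ (I ^ (n + t) • ⊤ : Submodule R (C ⊗[R] (Fin l → R))) := by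
    intro n
    have h1 := hx (n + t)
    have h2 : (I ^ (n + t) • ⊤ : Submodule R (C ⊗[R] M)) =
        (I ^ (n + t) • ⊤ : Submodule R (C ⊗[R] (Fin l → R))).map (q.lTensor C) := by
      rw [Submodule.map_smul'', Submodule.map_top, LinearMap.range_eq_top.2 hsur]
    rw [h2] at h1
    obtain ⟨e, he, hez⟩ := h1
    obtain ⟨κ, hκ⟩ := (hex (z - e)).1 (by rw [map_sub, hez, sub_self])
    exact ⟨κ, by rw [hκ]; simpa using he⟩
  choose κ hκ using hκ
  have hc : AdicCompletion.IsAdicCauchy I (C ⊗[R] K) κ := by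
    rw [AdicCompletion.isAdicCauchy_iff]
    intro n
    rw [SModEq.sub_mem]
    apply ht
    have h1 := Submodule.smul_mono (Ideal.pow_le_pow_right (I := I) (show n + t ≤ n + 1 + t by omega)) (le_refl _) (hκ (n + 1))
    have := sub_mem h1 (hκ n)
    change ι _ ∈ _
    rw [map_sub]
    convert this using 1
    abel
  obtain ⟨L, hL⟩ := hP.prec hc
  have hz : z - ι L = 0 := by
    apply (TensorProduct.piScalarRight R R C (Fin l)).injective
    rw [map_zero]
    funext j
    apply hH.haus
    intro n
    rw [SModEq.zero]
    have h1 : z - ι L ∈ (I ^ n • ⊤ : Submodule R (C ⊗[R] (Fin l → R))) := by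
      have a1 := Submodule.smul_mono (Ideal.pow_le_pow_right (I := I) (show n ≤ n + t by omega)) (le_refl _) (hκ n)
      have a2 := map_mem_pow_smul (I ^ n) ι (SModEq.sub_mem.1 (hL n))
      rw [map_sub] at a2
      convert add_mem a1 a2 using 1
      abel
    exact map_mem_pow_smul (I ^ n)
      (LinearMap.proj j ∘ₗ (TensorProduct.piScalarRight R R C (Fin l)).toLinearMap) h1
  rw [sub_eq_zero.1 hz]
  exact (hex _).2 ⟨L, rfl⟩


/-- Let `R` be a Noetherian commutative ring, `I ⊆ R` an ideal, and `C`
an `I`-adically separated and complete `R`-module (i.e. `C ≅ lim_n C/IⁿC`) such that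
`C/IⁿC` is a flat `(R/Iⁿ)`-module for every `n ≥ 1`. Then `C` is a flat `R`-module. -/
theorem flat_of_adically_complete_of_flat_quotients
    (R : Type) [CommRing R] [IsNoetherianRing R] (I : Ideal R)
    (C : Type) [AddCommGroup C] [Module R C]
    (hsep : Function.Bijective (AdicCompletion.of I C))
    (hflat : ∀ n : ℕ,
      Module.Flat (R ⧸ I ^ (n + 1)) (C ⧸ (I ^ (n + 1) • ⊤ : Submodule R C))) :
    Module.Flat R C := by
  rw [Module.Flat.iff_lTensor_injective']
  intro J
  rw [injective_iff_map_eq_zero]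
  intro y hy
  obtain ⟨t, ht⟩ := tensor_artin_rees I hflat J
  apply tensor_hausdorff I hsep hflat
  intro n
  apply ht
  rw [hy]
  exact zero_mem _
end
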